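/- Consider a hitting-set instance (A,B,U) with |A| = |B| = n in which every set of A has cardinality t = (|U|+1)/2, and let G be the graph associated with this instance with unit costs π ≡ 1 and S=(s). For every vertex v ∈ A, let k = |N²[v] ∩ B| be the number of B-vertices at distance at most 2 from v in G. Then W(v,s) = {v} ∪ (N(v) ∩ U) ∪ (N²[v] ∩ B), and in the diagram with respect to S+v=(s,v) one has ℓ_π(v,S+v) = k + t + 1 and ℓ_π(s,S+v) = 2n − k + t + 1. In particular L_π(S+v) is minimized over v ∈ A exactly when k = n, i.e., when v is a hitting set. -/

import Mathlib

/-!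
The relevant distances in the associated graph are at most three, so they can be read off from
adjacency and common neighbours. From `s`, the vertices `x`, `y` are at distance
`1`, those of `A ∪ U` at distance `2` and those of `B` at distance `3` (connectedness excludes
empty sets in `B`). Comparing with the distances from `v ∈ A` gives `W(v, s)` (`Wset_a_s`), a
disjoint union of `{v}`, a copy of the set `v`, and `N²[v] ∩ B`; hence its size is `1 + t + k`
(`ncard_Wset_a_s`).

For a list of two sites the territory of the second one is `W(v, s)` and that of the first one
is its complement, so the loads add up to the number of vertices, `2n + |U| + 3 = 2n + 2t + 2`.
The two loads therefore average `n + t + 1`, and their maximum equals this exactly when both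
do, i.e. when `k = n`. Finally `N²[v]` contains `b ∈ B` exactly when `v` and `b` share an
element (`dist_a_b_le_two_iff`).
-/

/-- The distance from a vertex `v` to a list `S` of vertices:
`d(v,S) = min_{s ∈ S} d(v,s)`. -/
noncomputable def dList {V : Type*} (G : SimpleGraph V) (v : V) (S : List V) : ℕ :=
  sInf ((G.dist v) '' {s | s ∈ S})

/-- The territory `𝕋(s_i, S)` of the `i`-th site of the list `S` in the prioritized
Voronoi diagram: vertices `v` with `d(v,s_i) = d(v,S)` and `d(v,s_j) > d(v,S)` for `j < i`. -/
def territory {V : Type*} (G : SimpleGraph V) (S : List V) (i : Fin S.length) : Set V :=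
  {v | G.dist v (S.get i) = dList G v S ∧
       ∀ j : Fin S.length, j < i → dList G v S < G.dist v (S.get j)}

/-- `W(u,v)`: the set of vertices strictly closer to `u` than to `v`. -/
def Wset {V : Type*} (G : SimpleGraph V) (u v : V) : Set V :=
  {w | G.dist u w < G.dist v w}

/-- The load `ℓ_π(s_i,S)` of the `i`-th site: the total cost of its territory. -/
noncomputable def load {V : Type*} (G : SimpleGraph V) (π : V → ℝ) (S : List V)
    (i : Fin S.length) : ℝ :=
  ∑ᶠ x ∈ territory G S i, π x

/-- The load `L_π(S)` of the prioritized Voronoi diagram: the maximum load of a site. -/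
noncomputable def Lload {V : Type*} (G : SimpleGraph V) (π : V → ℝ) (S : List V) : ℝ :=
  ⨆ i : Fin S.length, load G π S i

/-- Vertices of the graph associated with a hitting-set instance `(A,B,U)` with
`|A| = |B| = n` and universe `α`: one vertex `va i` (resp. `vb i`) per entry of the
list `A` (resp. `B`), one vertex `vu e` per element `e` of the universe, and three
special vertices `vs`, `vx`, `vy`. -/
inductive HSV (α : Type*) (n : ℕ) where
  | va : Fin n → HSV α n
  | vb : Fin n → HSV α n
  | vu : α → HSV α n
  | vs : HSV α n
  | vx : HSV α n
  | vy : HSV α n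

/-- Base (asymmetric) adjacency relation of the associated graph: `U ∪ {x,y}` is a
clique, `s` is adjacent exactly to `x` and `y`, each `a ∈ A` is adjacent to `y` and
to the elements of `a`, and each `b ∈ B` is adjacent to the elements of `b`. -/
def hsBase {α : Type*} {n : ℕ} (SA SB : Fin n → Finset α) :
    HSV α n → HSV α n → Prop
  | .vu _, .vu _ => True
  | .vu _, .vx => True
  | .vu _, .vy => True
  | .vx, .vy => True
  | .vs, .vx => True
  | .vs, .vy => True
  | .va _, .vy => True
  | .va i, .vu e => e ∈ SA i
  | .vb i, .vu e => e ∈ SB i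
  | _, _ => False

/-- The graph associated with a hitting-set instance. -/
def hsGraph {α : Type*} {n : ℕ} (SA SB : Fin n → Finset α) :
    SimpleGraph (HSV α n) :=
  SimpleGraph.fromRel (hsBase SA SB)

/-- The vertex set as the disjoint union of `A`, `B`, `U` and `{s, x, y}`. -/
def hsvEquiv (α : Type*) (n : ℕ) : HSV α n ≃ (Fin n ⊕ Fin n) ⊕ (α ⊕ Fin 3) where
  toFun
    | .va i => .inl (.inl i)
    | .vb i => .inl (.inr i)
    | .vu e => .inr (.inl e)
    | .vs => .inr (.inr 0)
    | .vx => .inr (.inr 1)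
    | .vy => .inr (.inr 2)
  invFun
    | .inl (.inl i) => .va i
    | .inl (.inr i) => .vb i
    | .inr (.inl e) => .vu e
    | .inr (.inr 0) => .vs
    | .inr (.inr 1) => .vx
    | .inr (.inr 2) => .vy
  left_inv v := by cases v <;> rfl
  right_inv v := by
    rcases v with (i | i) | (e | k)
    · rfl
    · rfl
    · rfl
    · fin_cases k <;> rfl

/-! ### Short distances in connected graphs -/

section Distances

variable {V : Type*} {G : SimpleGraph V}

lemma eq_or_adj_of_dist_le_one (hG : G.Connected) {u v : V} (h : G.dist u v ≤ 1) :
    u = v ∨ G.Adj u v := by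
  rcases Nat.le_one_iff_eq_zero_or_eq_one.1 h with h | h
  · exact .inl (hG.dist_eq_zero_iff.1 h)
  · exact .inr (SimpleGraph.dist_eq_one_iff_adj.1 h)

lemma exists_adj_adj_of_dist_le_two (hG : G.Connected) {u v : V} (h : G.dist u v ≤ 2)
    (huv : u ≠ v) (hadj : ¬ G.Adj u v) : ∃ w, G.Adj u w ∧ G.Adj w v := by
  obtain ⟨p, hp⟩ := hG.exists_walk_length_eq_dist u v
  rw [← hp] at h
  cases p with
  | nil => exact absurd rfl huv
  | cons h₁ q =>
    cases q with
    | nil => exact absurd h₁ hadj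
    | cons h₂ r =>
      cases r with
      | nil => exact ⟨_, h₁, h₂⟩
      | cons h₃ r => simp only [SimpleGraph.Walk.length_cons] at h; omega

lemma dist_le_one {u v : V} (h : G.Adj u v) : G.dist u v ≤ 1 :=
  (SimpleGraph.dist_eq_one_iff_adj.2 h).le

lemma dist_le_two (hG : G.Connected) {u w v : V} (h₁ : G.Adj u w) (h₂ : G.Adj w v) :
    G.dist u v ≤ 2 :=
  hG.dist_triangle.trans (add_le_add (dist_le_one h₁) (dist_le_one h₂))

end Distances

/-! ### Prioritized Voronoi diagrams with two sites -/

section Voronoi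

variable {V : Type*} (G : SimpleGraph V)

lemma dList_pair (s v w : V) : dList G w [s, v] = min (G.dist w s) (G.dist w v) := by
  have h : {z | z ∈ [s, v]} = ({s, v} : Set V) := by ext; simp
  rw [dList, h, Set.image_pair, csInf_pair]

/-- `𝕋(v, (s, v)) = W(v, s)`: ties go to the earlier site `s`. -/
lemma territory_pair_one (s v : V) : territory G [s, v] ⟨1, by simp⟩ = Wset G v s := by
  ext w
  simp only [territory, Wset, Set.mem_ofPred_eq, dList_pair, G.dist_comm (u := w)]
  constructor
  · rintro ⟨h₁, h₂⟩
    have := h₂ ⟨0, by simp⟩ (by simp)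
    simp at h₁ this
    omega
  · intro h
    refine ⟨by simp; omega, fun j hj => ?_⟩
    have hj0 : j = ⟨0, by simp⟩ := by
      rw [Fin.lt_def] at hj
      exact Fin.ext (by simpa using hj)
    subst hj0
    simp; omega

lemma territory_pair_zero (s v : V) : territory G [s, v] ⟨0, by simp⟩ = (Wset G v s)ᶜ := by
  ext w
  simp only [territory, Wset, Set.mem_compl_iff, Set.mem_ofPred_eq, dList_pair,
    G.dist_comm (u := w)]
  constructor
  · rintro ⟨h₁, -⟩
    simp at h₁
    omega
  · intro h
    refine ⟨by simp; omega, fun j hj => ?_⟩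
    exact absurd hj (by simp)

lemma finsum_mem_one_eq_ncard [Finite V] (s : Set V) :
    ∑ᶠ x ∈ s, (1 : ℝ) = (s.ncard : ℝ) := by
  have := Fintype.ofFinite V
  classical
  rw [finsum_mem_eq_toFinset_sum, Set.ncard_eq_toFinset_card']
  simp

lemma Lload_pair (π : V → ℝ) (s v : V) :
    Lload G π [s, v] =
      max (load G π [s, v] ⟨0, by simp⟩) (load G π [s, v] ⟨1, by simp⟩) := by
  apply le_antisymm
  · have : Nonempty (Fin [s, v].length) := ⟨⟨0, by simp⟩⟩
    refine ciSup_le fun j => ?_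
    obtain ⟨j, hj⟩ := j
    have hj2 : j = 0 ∨ j = 1 := by simp at hj; omega
    rcases hj2 with rfl | rfl
    · exact le_max_left _ _
    · exact le_max_right _ _
  · exact max_le (le_ciSup (f := load G π [s, v]) (Set.finite_range _).bddAbove _)
      (le_ciSup (f := load G π [s, v]) (Set.finite_range _).bddAbove _)

end Voronoi

/-! ### Distances in the associated graph -/

section HittingSet

variable {α : Type*} {n : ℕ} {SA SB : Fin n → Finset α}

lemma adj_s_x : (hsGraph SA SB).Adj .vs .vx := by simp [hsGraph, hsBase]

lemma adj_s_y : (hsGraph SA SB).Adj .vs .vy := by simp [hsGraph, hsBase]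

lemma adj_y_a (i : Fin n) : (hsGraph SA SB).Adj .vy (.va i) := by simp [hsGraph, hsBase]

lemma adj_y_u (e : α) : (hsGraph SA SB).Adj .vy (.vu e) := by simp [hsGraph, hsBase]

lemma adj_a_u {i : Fin n} {e : α} : (hsGraph SA SB).Adj (.va i) (.vu e) ↔ e ∈ SA i := by
  simp [hsGraph, hsBase]

lemma adj_b_iff {j : Fin n} {w : HSV α n} :
    (hsGraph SA SB).Adj w (.vb j) ↔ ∃ e ∈ SB j, w = .vu e := by
  cases w <;> simp [hsGraph, hsBase]

lemma not_adj_a_a (i j : Fin n) : ¬ (hsGraph SA SB).Adj (.va i) (.va j) := by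
  simp [hsGraph, hsBase]

lemma not_adj_s_u (e : α) : ¬ (hsGraph SA SB).Adj .vs (.vu e) := by
  simp [hsGraph, hsBase]

lemma dist_a_b_le_two_iff (hG : (hsGraph SA SB).Connected) [DecidableEq α] (i j : Fin n) :
    (hsGraph SA SB).dist (.va i) (.vb j) ≤ 2 ↔ (SA i ∩ SB j).Nonempty := by
  constructor
  · intro h
    obtain ⟨w, h₁, h₂⟩ := exists_adj_adj_of_dist_le_two hG h (by simp) (by simp [adj_b_iff])
    obtain ⟨e, he, rfl⟩ := adj_b_iff.1 h₂
    exact ⟨e, Finset.mem_inter.2 ⟨adj_a_u.1 h₁, he⟩⟩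
  · rintro ⟨e, he⟩
    rw [Finset.mem_inter] at he
    exact dist_le_two hG (adj_a_u.2 he.1) (adj_b_iff.2 ⟨e, he.2, rfl⟩)

/-- Connectedness forces every `b ∈ B` to be nonempty, so `s - y - u - b` is a walk. -/
lemma dist_s_b_le_three (hG : (hsGraph SA SB).Connected) (j : Fin n) :
    (hsGraph SA SB).dist .vs (.vb j) ≤ 3 := by
  obtain ⟨p⟩ := hG.preconnected (.vb j) .vs
  cases p with
  | cons h q =>
    obtain ⟨e, he, rfl⟩ := adj_b_iff.1 h.symm
    exact hG.dist_triangle.trans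
      (add_le_add (dist_le_two hG adj_s_y (adj_y_u e)) (dist_le_one h.symm))

lemma two_lt_dist_s_b (hG : (hsGraph SA SB).Connected) (j : Fin n) :
    2 < (hsGraph SA SB).dist .vs (.vb j) := by
  by_contra! h
  obtain ⟨w, h₁, h₂⟩ := exists_adj_adj_of_dist_le_two hG h (by simp) (by simp [adj_b_iff])
  obtain ⟨e, -, rfl⟩ := adj_b_iff.1 h₂
  exact not_adj_s_u e h₁

/-- The set `W(v, s)` split into its parts in `A`, `U` and `B`: the vertices of these parts
have distances `0 < 2`, `1 < 2` and `2 < 3` from `v` and `s`. -/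
lemma Wset_a_s (hG : (hsGraph SA SB).Connected) (i : Fin n) :
    Wset (hsGraph SA SB) (.va i) .vs =
      {.va i} ∪ .vu '' (SA i : Set α) ∪
        .vb '' {j | (hsGraph SA SB).dist (.va i) (.vb j) ≤ 2} := by
  ext w
  simp only [Wset, Set.mem_ofPred_eq]
  cases w with
  | va j =>
    have h2 := dist_le_two hG adj_s_y (adj_y_a j)
    suffices (hsGraph SA SB).dist (.va i) (.va j) < (hsGraph SA SB).dist .vs (.va j) ↔ j = i by
      simpa
    constructor
    · intro h
      rcases eq_or_adj_of_dist_le_one hG (Nat.le_of_lt_succ (h.trans_le h2)) with h | h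
      · simpa using h.symm
      · exact absurd h (not_adj_a_a i j)
    · rintro rfl
      simpa using hG.pos_dist_of_ne (by simp)
  | vb j =>
    have h2 := dist_s_b_le_three hG j
    have h3 := two_lt_dist_s_b hG j
    suffices (hsGraph SA SB).dist (.va i) (.vb j) < (hsGraph SA SB).dist .vs (.vb j) ↔
        (hsGraph SA SB).dist (.va i) (.vb j) ≤ 2 by simpa
    omega
  | vu e =>
    have h2 := dist_le_two hG adj_s_y (adj_y_u e)
    suffices (hsGraph SA SB).dist (.va i) (.vu e) < (hsGraph SA SB).dist .vs (.vu e) ↔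
        e ∈ SA i by simpa
    constructor
    · intro h
      rcases eq_or_adj_of_dist_le_one hG (Nat.le_of_lt_succ (h.trans_le h2)) with h | h
      · simp at h
      · exact adj_a_u.1 h
    · intro h
      have h1 := dist_le_one (adj_a_u (SB := SB).2 h)
      by_contra! h'
      rcases eq_or_adj_of_dist_le_one hG (h'.trans h1) with h | h
      · simp at h
      · exact not_adj_s_u e h
  | vs => simp
  | vx =>
    have h1 := dist_le_one (adj_s_x (SA := SA) (SB := SB))
    have h0 := hG.pos_dist_of_ne (u := .va i) (v := .vx) (by simp)
    suffices ¬ (hsGraph SA SB).dist (.va i) .vx < (hsGraph SA SB).dist .vs .vx by simpa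
    omega
  | vy =>
    have h1 := dist_le_one (adj_s_y (SA := SA) (SB := SB))
    have h0 := hG.pos_dist_of_ne (u := .va i) (v := .vy) (by simp)
    suffices ¬ (hsGraph SA SB).dist (.va i) .vy < (hsGraph SA SB).dist .vs .vy by simpa
    omega

/-- The set `N²[v] ∩ B`, indexed by `Fin n`. -/
lemma near_B_eq_image (i : Fin n) :
    {w | (hsGraph SA SB).dist w (.va i) ≤ 2} ∩ Set.range (HSV.vb : Fin n → HSV α n) =
      .vb '' {j | (hsGraph SA SB).dist (.va i) (.vb j) ≤ 2} := by
  ext w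
  cases w <;> simp [SimpleGraph.dist_comm]

lemma ncard_near_B (i : Fin n) :
    (HSV.vb '' {j | (hsGraph SA SB).dist (.va i) (.vb j) ≤ 2} : Set (HSV α n)).ncard =
      {j | (hsGraph SA SB).dist (.va i) (.vb j) ≤ 2}.ncard :=
  Set.ncard_image_of_injective _ fun _ _ h => by simpa using h

lemma ncard_Wset_a_s [Finite α] (hG : (hsGraph SA SB).Connected) (i : Fin n) :
    (Wset (hsGraph SA SB) (.va i) .vs).ncard =
      {j | (hsGraph SA SB).dist (.va i) (.vb j) ≤ 2}.ncard + (SA i).card + 1 := by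
  have : Finite (HSV α n) := .of_equiv _ (hsvEquiv α n).symm
  rw [Wset_a_s hG, Set.ncard_union_eq, Set.ncard_union_eq, ncard_near_B,
    Set.ncard_image_of_injective _ fun _ _ h => by simpa using h, Set.ncard_singleton,
    Set.ncard_coe_finset]
  · ring
  · simp
  · rw [Set.disjoint_left]
    rintro w (h | ⟨e, -, rfl⟩) ⟨j, -, h'⟩
    · rw [Set.mem_singleton_iff] at h
      simp [h] at h'
    · simp at h'

end HittingSet

/-- in the graph associated with a hitting-set instance with
`|A| = |B| = n` and all sets of `A` of cardinality `t = (|U|+1)/2`, with unit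
costs and `S = (s)`, for every vertex `v ∈ A` with `k = |N²[v] ∩ B|`:
`W(v,s) = {v} ∪ (N(v) ∩ U) ∪ (N²[v] ∩ B)`, `ℓ_π(v,S+v) = k + t + 1`,
`ℓ_π(s,S+v) = 2n − k + t + 1`, and `L_π(S+v)` attains its minimum value
`n + t + 1` exactly when `k = n`, i.e. when `v` is a hitting set. -/
theorem hs_hardness_A_vertex {α : Type*} [Fintype α] [DecidableEq α] (n t : ℕ)
    (SA SB : Fin n → Finset α)
    (hcardA : ∀ i : Fin n, (SA i).card = t)
    (ht : 2 * t = Fintype.card α + 1)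
    (hconn : (hsGraph SA SB).Connected) (i : Fin n) :
    Wset (hsGraph SA SB) (HSV.va i) HSV.vs =
        {HSV.va i} ∪
          ((hsGraph SA SB).neighborSet (HSV.va i) ∩ Set.range (HSV.vu : α → HSV α n)) ∪
          ({w | (hsGraph SA SB).dist w (HSV.va i) ≤ 2} ∩
            Set.range (HSV.vb : Fin n → HSV α n)) ∧
    load (hsGraph SA SB) (fun _ => 1) [HSV.vs, HSV.va i] ⟨1, by simp⟩ =
        ((Set.ncard ({w | (hsGraph SA SB).dist w (HSV.va i) ≤ 2} ∩
          Set.range (HSV.vb : Fin n → HSV α n)) : ℝ) + t + 1) ∧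
    load (hsGraph SA SB) (fun _ => 1) [HSV.vs, HSV.va i] ⟨0, by simp⟩ =
        (2 * (n : ℝ) - (Set.ncard ({w | (hsGraph SA SB).dist w (HSV.va i) ≤ 2} ∩
          Set.range (HSV.vb : Fin n → HSV α n)) : ℝ) + t + 1) ∧
    (Lload (hsGraph SA SB) (fun _ => 1) [HSV.vs, HSV.va i] = (n : ℝ) + t + 1 ↔
      Set.ncard ({w | (hsGraph SA SB).dist w (HSV.va i) ≤ 2} ∩
        Set.range (HSV.vb : Fin n → HSV α n)) = n) ∧
    (Set.ncard ({w | (hsGraph SA SB).dist w (HSV.va i) ≤ 2} ∩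
        Set.range (HSV.vb : Fin n → HSV α n)) = n ↔
      ∀ j : Fin n, (SA i ∩ SB j).Nonempty) := by
  have : Finite (HSV α n) := .of_equiv _ (hsvEquiv α n).symm
  have hW := ncard_Wset_a_s hconn i
  have hV : Nat.card (HSV α n) = 2 * n + 2 * t + 2 := by
    rw [Nat.card_congr (hsvEquiv α n)]
    simp
    omega
  have hcompl := Set.ncard_add_ncard_compl (Wset (hsGraph SA SB) (.va i) .vs)
  have h1 : load (hsGraph SA SB) (fun _ => 1) [HSV.vs, HSV.va i] ⟨1, by simp⟩ =
      ({j | (hsGraph SA SB).dist (.va i) (.vb j) ≤ 2}.ncard : ℝ) + t + 1 := by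
    rw [load, territory_pair_one, finsum_mem_one_eq_ncard, hW, hcardA]
    push_cast
    ring
  have h0 : load (hsGraph SA SB) (fun _ => 1) [HSV.vs, HSV.va i] ⟨0, by simp⟩ =
      2 * (n : ℝ) - ({j | (hsGraph SA SB).dist (.va i) (.vb j) ≤ 2}.ncard : ℝ) + t + 1 := by
    rw [load, territory_pair_zero, finsum_mem_one_eq_ncard]
    rw [hW, hV, hcardA] at hcompl
    have := congrArg (Nat.cast : ℕ → ℝ) hcompl
    push_cast at this
    linarith
  rw [near_B_eq_image, ncard_near_B]
  refine ⟨?_, h1, h0, ?_, ?_⟩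
  · rw [Wset_a_s hconn]
    congr 2
    ext w
    cases w <;> simp [adj_a_u]
  · rw [Lload_pair, h0, h1, ← Nat.cast_inj (R := ℝ)]
    constructor
    · intro h
      have ha := (le_max_left _ _).trans_eq h
      have hb := (le_max_right _ _).trans_eq h
      linarith
    · intro h
      rw [h, max_eq_left] <;> linarith
  · simp only [← dist_a_b_le_two_iff hconn]
    refine Iff.trans ?_
      (Set.eq_univ_iff_forall (s := {j | (hsGraph SA SB).dist (.va i) (.vb j) ≤ 2}))
    constructor
    · intro h
      exact Set.eq_of_subset_of_ncard_le (Set.subset_univ _) (by simp [h])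
    · intro h
      simp [h]
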